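/- Let X be a finite set with |X| = m ≥ 2 and let L be the free Lie algebra over ℤ on X, equipped with its natural ℕ-grading in which the generators have degree 1 (so the degree-n component is spanned by n-fold brackets of generators). Let ρ ∈ L be homogeneous of degree e ≥ 2 and suppose ρ is not a proper multiple, i.e., whenever ρ = k·σ with k ∈ ℤ and σ ∈ L, then k = 1 or k = −1. Then the quotient Lie algebra L/(ρ) of L by the Lie ideal generated by ρ is torsion-free as a ℤ-module. -/

import Mathlib

open LieSubmodule

/-- `IsBracketMonomial X d a` says that `a` is a `d`-fold bracket of generators of the free
Lie algebra over `ℤ` on `X`. -/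
inductive IsBracketMonomial (X : Type*) : ℕ → FreeLieAlgebra ℤ X → Prop
  | of (x : X) : IsBracketMonomial X 1 (FreeLieAlgebra.of ℤ x)
  | lie {d₁ d₂ : ℕ} {a b : FreeLieAlgebra ℤ X} :
      IsBracketMonomial X d₁ a → IsBracketMonomial X d₂ b →
      IsBracketMonomial X (d₁ + d₂) ⁅a, b⁆

/-- The degree-`d` component of the natural ℕ-grading of the free Lie algebra over `ℤ` on
`X` in which the generators have degree `1`: the span of the `d`-fold brackets of
generators. -/
noncomputable def homogeneousComponent (X : Type*) (d : ℕ) : Submodule ℤ (FreeLieAlgebra ℤ X) :=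
  Submodule.span ℤ {a | IsBracketMonomial X d a}

/-!
Order words by length and, for equal lengths, by the reverse lexicographic order. The standard
bracketings of Lyndon words form a basis of `L`, and each expands into associative words with
leading word the Lyndon word itself and leading coefficient `1`; so the expansion of Lie elements
remains injective modulo a prime `p`, and leading words of Lie elements modulo `p` are Lyndon.

Let `w` be the leading word of `ρ` modulo `p`, where `ρ` is nonzero because it is not a proper
multiple. A Lyndon word does not overlap itself, so the elements `s * ρ`, with `s` avoiding `w` as a
factor, are right linearly independent modulo `p`. The iterated commutators `ad_s ρ` differ from
them by smaller terms, so they too are right linearly independent and generate a free algebra, hence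
a free Lie algebra. On the other hand, rewriting `w` by means of `ρ` shows that they generate the
ideal `I = (ρ)` as a Lie algebra modulo `p * I`.

Now let `θ` map the free Lie algebra on the words `s` to `L` by `s ↦ ad_s ρ`. If `p * a ∈ I`, write
`p * a = θ f + p * i` with `i ∈ I`. Then `θ f` vanishes modulo `p`, so `f = p * g` by freeness, and
`a = θ g + i` lies in `I`.
-/

namespace OneRelatorLie

attribute [local instance] LieRing.ofAssociativeRing

section Words

variable {X : Type*} [LinearOrder X]

theorem append_lt_append_left_iff (s : List X) {a b : List X} : s ++ a < s ++ b ↔ a < b := by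
  induction s with
  | nil => rfl
  | cons x s ih => simpa only [List.cons_append, List.cons_lt_cons_self] using ih

theorem le_append_right (a t : List X) : a ≤ a ++ t := by
  rcases eq_or_ne t [] with rfl | ht
  · rw [List.append_nil]
  · obtain ⟨x, t, rfl⟩ := List.exists_cons_of_ne_nil ht
    simpa only [List.append_nil] using
      ((append_lt_append_left_iff a).2 (List.nil_lt_cons x t)).le

theorem exists_append_or_append_lt_append {a b : List X} (h : a < b) :
    (∃ t, t ≠ [] ∧ b = a ++ t) ∨ ∀ c d, a ++ c < b ++ d := by
  induction a generalizing b with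
  | nil => exact Or.inl ⟨b, fun hb ↦ List.not_lt_nil _ (hb ▸ h), rfl⟩
  | cons x a ih =>
    cases b with
    | nil => exact absurd h (List.not_lt_nil _)
    | cons y b =>
      simp only [List.cons_append, List.cons_lt_cons_iff] at h ⊢
      rcases h with hxy | ⟨rfl, hab⟩
      · exact Or.inr fun _ _ ↦ Or.inl hxy
      · rcases ih hab with ⟨t, ht, rfl⟩ | hlt
        · exact Or.inl ⟨t, ht, rfl⟩
        · exact Or.inr fun c d ↦ Or.inr ⟨rfl, hlt c d⟩

theorem append_lt_append_of_length_le {a b : List X} (h : a < b) (hl : b.length ≤ a.length)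
    (c d : List X) : a ++ c < b ++ d := by
  rcases exists_append_or_append_lt_append h with ⟨t, ht, rfl⟩ | hlt
  · have := List.length_pos_iff.2 ht
    rw [List.length_append] at hl
    omega
  · exact hlt c d

/-- Lyndon words: nonempty words that are lexicographically smaller than each of their proper
nonempty suffixes. -/
def IsLyndon (w : List X) : Prop :=
  w ≠ [] ∧ ∀ s t, w = s ++ t → s ≠ [] → t ≠ [] → w < t

namespace IsLyndon

variable {u v w : List X}

theorem singleton (x : X) : IsLyndon [x] := by
  refine ⟨List.cons_ne_nil _ _, fun s t hst hs ht ↦ ?_⟩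
  rcases List.singleton_eq_append_iff.1 hst with ⟨rfl, -⟩ | ⟨-, rfl⟩
  exacts [absurd rfl hs, absurd rfl ht]

theorem append_lt (hu : IsLyndon u) (hv : IsLyndon v) (h : u < v) : u ++ v < v := by
  rcases exists_append_or_append_lt_append h with ⟨t, ht, rfl⟩ | hlt
  · exact (append_lt_append_left_iff u).2 (hv.2 u t rfl hu.1 ht)
  · simpa only [List.append_nil] using hlt v []

theorem append (hu : IsLyndon u) (hv : IsLyndon v) (h : u < v) : IsLyndon (u ++ v) := by
  refine ⟨List.append_ne_nil_of_left_ne_nil hu.1 v, fun s t hst hs ht ↦ ?_⟩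
  have huv := hu.append_lt hv h
  rcases List.append_eq_append_iff.1 hst with ⟨a, rfl, rfl⟩ | ⟨a, rfl, rfl⟩
  · rcases eq_or_ne a [] with rfl | ha
    · simpa only [List.nil_append] using huv
    · exact huv.trans (hv.2 a t rfl ha ht)
  · rcases eq_or_ne a [] with rfl | ha
    · simpa only [List.nil_append] using huv
    · exact append_lt_append_of_length_le (hu.2 s a rfl hs ha) (by simp) _ _

theorem eq_of_border (hw : IsLyndon w) {q : List X} (hpre : q <+: w) (hsuf : q <:+ w)
    (hq : q ≠ []) : q = w := by
  obtain ⟨t, rfl⟩ := hpre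
  obtain ⟨s, hs⟩ := hsuf
  rcases eq_or_ne s [] with rfl | hs'
  · exact hs
  · exact absurd (hw.2 s q hs.symm hs' hq) (le_append_right q t).not_gt

/-- Having no proper border, `w` does not overlap itself. -/
theorem eq_nil_of_append_eq_append (hw : IsLyndon w) {s t b b' : List X} (hst : ¬ w <:+: s ++ t)
    (h : w ++ b = t ++ (w ++ b')) : t = [] := by
  rcases List.append_eq_append_iff.1 h with ⟨q, rfl, -⟩ | ⟨q, hwt, hq⟩
  · exact absurd ⟨s, q, List.append_assoc s w q⟩ hst
  · have hqw : q = w ∨ q = [] := by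
      refine or_iff_not_imp_right.2 fun hq0 ↦ hw.eq_of_border ?_ ⟨t, hwt.symm⟩ hq0
      refine List.prefix_of_prefix_length_le ⟨b, hq.symm⟩ ⟨b', rfl⟩ ?_
      rw [hwt, List.length_append]
      exact Nat.le_add_left _ _
    rcases hqw with rfl | rfl
    · exact List.append_left_eq_self.1 hwt.symm
    · rw [List.append_nil] at hwt
      exact absurd (hwt ▸ List.infix_append_right) hst

theorem eq_and_eq_of_first_occurrence (hw : IsLyndon w) {s s' b b' : List X} (hs : ¬ w <:+: s)
    (hs' : ¬ w <:+: s') (h : s ++ w ++ b = s' ++ w ++ b') : s = s' ∧ b = b' := by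
  have hss' : s = s' := by
    simp only [List.append_assoc] at h
    rcases List.append_eq_append_iff.1 h with ⟨t, rfl, ht⟩ | ⟨t, rfl, ht⟩
    · rw [hw.eq_nil_of_append_eq_append hs' ht, List.append_nil]
    · rw [hw.eq_nil_of_append_eq_append hs ht, List.append_nil]
  subst hss'
  exact ⟨rfl, List.append_cancel_left h⟩

end IsLyndon

end Words

section LyndonTrees

variable {X : Type*}

/-- The word of leaves, read from left to right, of a bracketing. -/
def word : FreeMagma X → List X
  | .of x => [x]
  | .mul u v => word u ++ word v

theorem word_mul (u v : FreeMagma X) : word (u * v) = word u ++ word v := rfl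

theorem word_ne_nil (t : FreeMagma X) : word t ≠ [] := by
  induction t with
  | ih1 x => exact List.cons_ne_nil _ _
  | ih2 u v ihu _ => exact List.append_ne_nil_of_left_ne_nil ihu _

/-- The bracketings of Lyndon words obtained by iterating the standard factorization, in which the
right factor is the least proper suffix. That minimality is encoded by the last condition, on
the right son of the left son. -/
inductive IsLyndonTree [LinearOrder X] : FreeMagma X → Prop
  | of (x : X) : IsLyndonTree (.of x)
  | mul {u v : FreeMagma X} : IsLyndonTree u → IsLyndonTree v → word u < word v →
      (∀ a b, u = a * b → word v ≤ word b) → IsLyndonTree (u * v)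

namespace IsLyndonTree

variable [LinearOrder X] {t u v : FreeMagma X}

theorem isLyndon (ht : IsLyndonTree t) : IsLyndon (word t) := by
  induction ht with
  | of x => exact .singleton x
  | mul _ _ huv _ ihu ihv => exact ihu.append ihv huv

theorem word_right_le (h : IsLyndonTree (u * v)) {s t : List X}
    (hst : word u ++ word v = s ++ t) (hs : s ≠ []) (ht : t ≠ []) : word v ≤ t := by
  induction u generalizing v s t with
  | ih1 x =>
    cases h with | mul hu hv _ _ =>
    obtain ⟨y, s, rfl⟩ := List.exists_cons_of_ne_nil hs
    obtain ⟨-, hvst⟩ := List.cons_eq_cons.1 hst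
    rcases eq_or_ne s [] with rfl | hs'
    · exact hvst.le
    · exact (hv.isLyndon.2 s t hvst hs' ht).le
  | ih2 a b iha _ =>
    cases h with | mul hu hv _ hvb =>
    rcases List.append_eq_append_iff.1 hst with ⟨c, -, hvct⟩ | ⟨c, huc, rfl⟩
    · rcases eq_or_ne c [] with rfl | hc
      · exact hvct.le
      · exact (hv.isLyndon.2 c t hvct hc ht).le
    · rcases eq_or_ne c [] with rfl | hc
      · rfl
      · exact (hvb a b rfl).trans ((iha hu huc hs hc).trans (le_append_right _ _))

theorem eq_of_word_eq {t' : FreeMagma X} (h : IsLyndonTree t) (h' : IsLyndonTree t')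
    (hword : word t = word t') : t = t' := by
  have singleton_ne {x : X} {u v : FreeMagma X} : [x] ≠ word u ++ word v := fun hx ↦ by
    rcases List.singleton_eq_append_iff.1 hx with ⟨hu, -⟩ | ⟨-, hv⟩
    exacts [word_ne_nil u hu, word_ne_nil v hv]
  induction h generalizing t' with
  | of x =>
    cases h' with
    | of y => rw [List.singleton_inj.1 hword]
    | mul => exact absurd hword singleton_ne
  | @mul a b ha hb hab hba iha ihb =>
    cases h' with
    | of y => exact absurd hword.symm singleton_ne
    | @mul u v hu hv huv hvu =>
      have hbv : word b = word v := le_antisymm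
        (word_right_le (.mul ha hb hab hba) hword (word_ne_nil u) (word_ne_nil v))
        (word_right_le (.mul hu hv huv hvu) hword.symm (word_ne_nil a) (word_ne_nil b))
      have hau : word a = word u :=
        List.append_cancel_right (by rwa [word_mul, word_mul, ← hbv] at hword)
      rw [iha hu hau, ihb hv hbv]

end IsLyndonTree

end LyndonTrees

section Spanning

variable (R : Type*) [CommRing R] {X : Type*}

theorem lieSubalgebra_eq_top_of_forall_of_mem (K : LieSubalgebra R (FreeLieAlgebra R X))
    (hK : ∀ x, FreeLieAlgebra.of R x ∈ K) : K = ⊤ := by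
  let f : FreeLieAlgebra R X →ₗ⁅R⁆ K := FreeLieAlgebra.lift R fun x ↦ ⟨_, hK x⟩
  have hf : K.incl.comp f = LieHom.id := FreeLieAlgebra.hom_ext fun x ↦
    congrArg Subtype.val (FreeLieAlgebra.lift_of_apply (R := R) (fun x ↦ (⟨_, hK x⟩ : K)) x)
  refine eq_top_iff.2 fun a _ ↦ ?_
  have hfa : (f a : FreeLieAlgebra R X) = a := LieHom.congr_fun hf a
  exact hfa ▸ (f a).2

/-- The Lie monomial of a bracketing. -/
noncomputable def bracket : FreeMagma X → FreeLieAlgebra R X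
  | .of x => FreeLieAlgebra.of R x
  | .mul u v => ⁅bracket u, bracket v⁆

theorem bracket_mul (u v : FreeMagma X) : bracket R (u * v) = ⁅bracket R u, bracket R v⁆ := rfl

theorem finite_setOf_coe_le (M : Multiset X) :
    {l : List X | (l : Multiset X) ≤ M}.Finite := by
  have hfiber (s : Multiset X) : ((fun l : List X ↦ (l : Multiset X)) ⁻¹' {s}).Finite :=
    s.lists.finite_toSet.subset fun l hl ↦ (s.mem_lists_iff l).2 hl.symm
  exact (M.powerset.finite_toSet.preimage' fun s _ ↦ hfiber s).subset
    fun l hl ↦ Multiset.mem_powerset.2 hl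

variable [LinearOrder X]

/-- The span of the Lyndon monomials of multidegree `M` whose word is smaller than `m`. -/
noncomputable def lyndonSpan (M : Multiset X) (m : List X) : Submodule R (FreeLieAlgebra R X) :=
  .span R {a | ∃ t, IsLyndonTree t ∧ (word t : Multiset X) = M ∧ word t < m ∧ bracket R t = a}

variable {R}

theorem bracket_mem_lyndonSpan {t : FreeMagma X} (ht : IsLyndonTree t) {m : List X}
    (hm : word t < m) : bracket R t ∈ lyndonSpan R (word t : Multiset X) m :=
  Submodule.subset_span ⟨t, ht, rfl, hm, rfl⟩

theorem lyndonSpan_mono (M : Multiset X) {m m' : List X} (h : m ≤ m') :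
    lyndonSpan R M m ≤ lyndonSpan R M m' :=
  Submodule.span_mono fun _ ⟨t, ht, hM, hm, ha⟩ ↦ ⟨t, ht, hM, hm.trans_le h, ha⟩

theorem lie_bracket_mem_of_forall_lt {u v : FreeMagma X} (hu : IsLyndonTree u)
    (hv : IsLyndonTree v) (S : Submodule R (FreeLieAlgebra R X))
    (huv : word u < word v → ⁅bracket R u, bracket R v⁆ ∈ S)
    (hvu : word v < word u → ⁅bracket R v, bracket R u⁆ ∈ S) :
    ⁅bracket R u, bracket R v⁆ ∈ S := by
  rcases lt_trichotomy (word u) (word v) with h | h | h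
  · exact huv h
  · rw [hu.eq_of_word_eq hv h, lie_self]
    exact S.zero_mem
  · rw [← lie_skew]
    exact S.neg_mem (hvu h)

theorem lie_mem_lyndonSpan {m : List X} {M₁ M₂ : Multiset X}
    (H : ∀ u v : FreeMagma X, IsLyndonTree u → IsLyndonTree v → word u < word v → word v < m →
      (word u + word v : Multiset X) = M₁ + M₂ →
      ⁅bracket R u, bracket R v⁆ ∈ lyndonSpan R (M₁ + M₂) m)
    {a b : FreeLieAlgebra R X} (ha : a ∈ lyndonSpan R M₁ m) (hb : b ∈ lyndonSpan R M₂ m) :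
    ⁅a, b⁆ ∈ lyndonSpan R (M₁ + M₂) m := by
  refine LinearMap.BilinMap.apply_apply_mem_of_mem_span _ _ _
    (LieModule.toEnd R _ (FreeLieAlgebra R X)).toLinearMap ?_ a b ha hb
  rintro _ ⟨u, hu, rfl, hum, rfl⟩ _ ⟨v, hv, rfl, hvm, rfl⟩
  exact lie_bracket_mem_of_forall_lt hu hv _ (fun h ↦ H u v hu hv h hvm rfl)
    fun h ↦ H v u hv hu h hum (add_comm _ _)

theorem lie_bracket_mem_lyndonSpan_step {u v : FreeMagma X} (hu : IsLyndonTree u)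
    (hv : IsLyndonTree v) (huv : word u < word v)
    (ih : ∀ a b : FreeMagma X, IsLyndonTree a → IsLyndonTree b → word a < word b →
      (word a + word b : Multiset X) < word u + word v ∨
        (word a + word b : Multiset X) = word u + word v ∧ word b < word v →
      ⁅bracket R a, bracket R b⁆ ∈ lyndonSpan R (word a + word b : Multiset X) (word b)) :
    ⁅bracket R u, bracket R v⁆ ∈ lyndonSpan R (word u + word v : Multiset X) (word v) := by
  by_cases hright : ∀ a b, u = a * b → word v ≤ word b
  · exact bracket_mem_lyndonSpan (.mul hu hv huv hright) (hu.isLyndon.append_lt hv.isLyndon huv)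
  -- Otherwise `u = a * b` with `b < v`, and `⁅⁅a, b⁆, v⁆ = ⁅a, ⁅b, v⁆⁆ - ⁅b, ⁅a, v⁆⁆`. The inner
  -- brackets have smaller multidegree, and straightening them only leaves outer brackets whose
  -- larger word is smaller than `v`.
  push Not at hright
  obtain ⟨a, b, rfl, hbv⟩ := hright
  cases hu with | mul ha hb hab _ =>
  have hav := hab.trans hbv
  have hword : (word (a * b) : Multiset X) = word a + word b := rfl
  have hlt {s t : FreeMagma X} (h : (word s + word t : Multiset X) = word (a * b)) :
      (word t + word v : Multiset X) < word (a * b) + word v := by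
    rw [← h]
    gcongr
    exact lt_add_of_pos_left _ (pos_iff_ne_zero.2 (Multiset.coe_eq_zero _ |>.not.2 (word_ne_nil s)))
  have H : ∀ M₁ M₂ : Multiset X, M₁ + M₂ = word (a * b) + word v →
      ∀ c ∈ lyndonSpan R M₁ (word v), ∀ d ∈ lyndonSpan R M₂ (word v),
      ⁅c, d⁆ ∈ lyndonSpan R (word (a * b) + word v : Multiset X) (word v) := by
    intro M₁ M₂ hM c hc d hd
    rw [← hM]
    refine lie_mem_lyndonSpan (fun s t hs ht hst htv hst' ↦ ?_) hc hd
    rw [← hst']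
    exact lyndonSpan_mono _ htv.le (ih s t hs ht hst (.inr ⟨hst'.trans hM, htv⟩))
  rw [bracket_mul, lie_lie]
  exact Submodule.sub_mem _
    (H _ _ (by rw [hword, add_assoc]) _ (bracket_mem_lyndonSpan ha hav) _
      (ih b v hb hv hbv (.inl (hlt (s := a) rfl))))
    (H _ _ (by rw [hword, add_assoc, add_left_comm]) _ (bracket_mem_lyndonSpan hb hbv) _
      (ih a v ha hv hav (.inl (hlt (s := b) (add_comm _ _)))))

theorem lie_bracket_mem_lyndonSpan {u v : FreeMagma X} (hu : IsLyndonTree u)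
    (hv : IsLyndonTree v) (huv : word u < word v) :
    ⁅bracket R u, bracket R v⁆ ∈ lyndonSpan R (word u + word v : Multiset X) (word v) := by
  induction hM : (word u + word v : Multiset X) using Multiset.strongInductionOn
    generalizing u v with | _ M ihM =>
  have hwf : {l : List X | (l : Multiset X) ≤ M}.WellFoundedOn (· < ·) :=
    (finite_setOf_coe_le M).wellFoundedOn
  have hvM : (word v : Multiset X) ≤ M :=
    hM.symm ▸ Multiset.le_add_left (word v : Multiset X) (word u)
  refine hwf.induction (P := fun m ↦ ∀ u v : FreeMagma X, IsLyndonTree u → IsLyndonTree v →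
    word u < word v → (word u + word v : Multiset X) = M → word v = m →
    ⁅bracket R u, bracket R v⁆ ∈ lyndonSpan R M m) hvM ?_ u v hu hv huv hM rfl
  rintro _ - ihm u v hu hv huv rfl rfl
  refine lie_bracket_mem_lyndonSpan_step hu hv huv fun a b ha hb hab h ↦ ?_
  rcases h with h | ⟨h, hbv⟩
  · exact ihM _ h ha hb hab rfl
  · rw [h]
    exact ihm (word b) ((Multiset.le_add_left _ _).trans h.le) hbv a b ha hb hab h rfl

theorem span_bracket_eq_top :
    Submodule.span R (Set.range fun t : {t : FreeMagma X // IsLyndonTree t} ↦ bracket R t.1) =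
      ⊤ := by
  set S := Submodule.span R
    (Set.range fun t : {t : FreeMagma X // IsLyndonTree t} ↦ bracket R t.1)
  have hle (M : Multiset X) (m : List X) : lyndonSpan R M m ≤ S :=
    Submodule.span_mono fun _ ⟨t, ht, _, _, ha⟩ ↦ ⟨⟨t, ht⟩, ha⟩
  let K : LieSubalgebra R (FreeLieAlgebra R X) :=
    { S with
      lie_mem' := by
        refine fun {a b} ha hb ↦ LinearMap.BilinMap.apply_apply_mem_of_mem_span S _ _
          (LieModule.toEnd R _ (FreeLieAlgebra R X)).toLinearMap ?_ a b ha hb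
        rintro _ ⟨⟨u, hu⟩, rfl⟩ _ ⟨⟨v, hv⟩, rfl⟩
        exact lie_bracket_mem_of_forall_lt hu hv _
          (fun h ↦ hle _ _ (lie_bracket_mem_lyndonSpan hu hv h))
          fun h ↦ hle _ _ (lie_bracket_mem_lyndonSpan hv hu h) }
  have hK : K = ⊤ := lieSubalgebra_eq_top_of_forall_of_mem R K fun x ↦
    Submodule.subset_span ⟨⟨.of x, .of x⟩, rfl⟩
  exact congrArg LieSubalgebra.toSubmodule hK

end Spanning

section WordOrder

variable {X : Type*} [LinearOrder X]

/-- The order on words in which longer words are larger and, among words of the same length,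
lexicographically *smaller* words are larger. With this choice the leading word of the associative
expansion of a Lyndon bracket is the Lyndon word itself. -/
scoped instance : LinearOrder (FreeAddMonoid X) :=
  LinearOrder.lift' (fun z ↦ toLex (z.length, OrderDual.toDual z.toList)) fun _ _ h ↦
    congrArg (fun p : ℕ ×ₗ (List X)ᵒᵈ ↦ FreeAddMonoid.ofList (OrderDual.ofDual (ofLex p).2)) h

theorem word_lt_iff {z z' : FreeAddMonoid X} :
    z < z' ↔ z.length < z'.length ∨ z.length = z'.length ∧ z'.toList < z.toList :=
  Prod.Lex.lt_iff

theorem lt_add_add_of_length_le {a w b z : FreeAddMonoid X} (hw : w ≠ 0)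
    (hz : z.length ≤ a.length + b.length) : z < a + w + b := by
  refine word_lt_iff.2 (.inl ?_)
  have hpos : 0 < w.length := Nat.pos_of_ne_zero (mt FreeAddMonoid.length_eq_zero.1 hw)
  simp only [FreeAddMonoid.length_add]
  omega

scoped instance : OrderBot (FreeAddMonoid X) where
  bot := 0
  bot_le z := by
    rcases eq_or_ne z 0 with rfl | hz
    · rfl
    · have hpos : 0 < z.length := Nat.pos_of_ne_zero (mt FreeAddMonoid.length_eq_zero.1 hz)
      exact (word_lt_iff (z := 0) |>.2 (.inl hpos)).le

scoped instance : AddLeftStrictMono (FreeAddMonoid X) where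
  elim s z z' h := by
    simp only [word_lt_iff, FreeAddMonoid.length_add] at h ⊢
    rcases h with h | ⟨h, h'⟩
    · exact .inl (by omega)
    · exact .inr ⟨by omega, (append_lt_append_left_iff s.toList).2 h'⟩

scoped instance : AddRightStrictMono (FreeAddMonoid X) where
  elim s z z' h := by
    simp only [Function.swap, word_lt_iff, FreeAddMonoid.length_add] at h ⊢
    rcases h with h | ⟨h, h'⟩
    · exact .inl (by omega)
    · exact .inr ⟨by omega, append_lt_append_of_length_le h' h.le s.toList s.toList⟩

theorem lex_gt_of_lt_of_length_eq {a b : List X} (hlen : a.length = b.length) (h : b < a) :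
    List.Lex (· > ·) a b := by
  induction a generalizing b with
  | nil => exact absurd h (List.not_lt_nil _)
  | cons x a ih =>
    cases b with
    | nil => exact absurd hlen (Nat.succ_ne_zero _)
    | cons y b =>
      rcases List.cons_lt_cons_iff.1 h with h | ⟨rfl, h'⟩
      · exact .rel h
      · exact .cons (ih (Nat.succ_injective hlen) h')

scoped instance [WellFoundedGT X] : WellFoundedLT (FreeAddMonoid X) where
  wf := by
    refine Subrelation.wf (fun {z z'} h ↦ ?_)
      (InvImage.wf FreeAddMonoid.toList (List.Shortlex.wf (wellFounded_gt (α := X))))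
    refine List.shortlex_def.2 ((word_lt_iff.1 h).imp_right fun h ↦ ?_)
    exact ⟨h.1, lex_gt_of_lt_of_length_eq h.1 h.2⟩

end WordOrder

section LeadingTerms

open AddMonoidAlgebra

variable {k A B : Type*} [Semiring k] [LinearOrder B] [OrderBot B] {D : A → B}

theorem supDegree_smul_le (c : k) (f : k[A]) : (c • f).supDegree D ≤ f.supDegree D :=
  Finset.sup_mono Finsupp.support_smul

variable [AddZeroClass A]

theorem supDegree_smul_and_leadingCoeff_smul (hD : D.Injective) {c : k} (hc : c ≠ 0) {f : k[A]}
    (hf : f.Monic D) :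
    (c • f).supDegree D = f.supDegree D ∧ (c • f).leadingCoeff D = c := by
  have : Nontrivial k := ⟨c, 0, hc⟩
  obtain ⟨a, ha⟩ := supDegree_mem_range D hf.ne_zero
  have hinv : D.invFun (D a) = a := Function.leftInverse_invFun hD a
  have hfa : f.coeff a = 1 := by rw [← hinv, ha]; exact hf
  have hcoeff : (c • f).coeff a = c := by simp [hfa]
  have hdeg : (c • f).supDegree D = f.supDegree D :=
    (supDegree_smul_le c f).antisymm (ha ▸ Finset.le_sup (by simp [hfa, hc]))
  exact ⟨hdeg, by rw [leadingCoeff, hdeg, ← ha, hinv, hcoeff]⟩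

theorem exists_leading_linearCombination {ι : Type*} (hD : D.Injective) {v : ι → k[A]}
    (hv : ∀ i, (v i).Monic D) (hinj : Function.Injective fun i ↦ (v i).supDegree D)
    {c : ι →₀ k} (hc : c ≠ 0) :
    ∃ i ∈ c.support, (Finsupp.linearCombination k v c).supDegree D = (v i).supDegree D ∧
      (Finsupp.linearCombination k v c).leadingCoeff D = c i := by
  obtain ⟨i, hi, hmax⟩ := c.support.exists_max_image (fun i ↦ (v i).supDegree D)
    (Finsupp.support_nonempty_iff.2 hc)
  have hterm {j : ι} (hj : j ∈ c.support) :=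
    supDegree_smul_and_leadingCoeff_smul hD (Finsupp.mem_support_iff.1 hj) (hv j)
  have hsum := supDegree_leadingCoeff_sum_eq (D := D) (f := fun j ↦ c j • v j) hi
    fun j hj hji ↦ by
      rw [(hterm hj).1, (hterm hi).1]
      exact (hmax j hj).lt_of_ne (hinj.ne hji)
  rw [(hterm hi).1, (hterm hi).2] at hsum
  exact ⟨i, hi, hsum⟩

end LeadingTerms

section FreeAssoc

open AddMonoidAlgebra

/-- The free associative algebra on `X`, as the monoid algebra of the free monoid of words. It is
written additively to make the library's theory of leading terms (`AddMonoidAlgebra.supDegree`)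
available. -/
abbrev FreeAssoc (k X : Type*) [Semiring k] : Type _ := AddMonoidAlgebra k (FreeAddMonoid X)

variable (k : Type*) [CommRing k] {X : Type*}

/-- A word, as an element of the free associative algebra. -/
noncomputable abbrev monomial (z : FreeAddMonoid X) : FreeAssoc k X := .single z 1

theorem monomial_add (a b : FreeAddMonoid X) :
    monomial k (a + b) = monomial k a * monomial k b := by
  rw [AddMonoidAlgebra.single_mul_single, mul_one]

theorem span_monomial_eq_top : Submodule.span k (Set.range (monomial k (X := X))) = ⊤ := by
  refine eq_top_iff.2 fun f _ ↦ ?_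
  rw [← AddMonoidAlgebra.sum_coeff_single f]
  refine Submodule.sum_mem _ fun z _ ↦ ?_
  rw [← mul_one (f.coeff z), ← smul_eq_mul, ← AddMonoidAlgebra.smul_single]
  exact Submodule.smul_mem _ _ (Submodule.subset_span ⟨z, rfl⟩)

/-- The universal property of the free associative algebra. -/
noncomputable def freeAssocLift {A : Type*} [Ring A] [Algebra k A] (g : X → A) :
    FreeAssoc k X →ₐ[k] A :=
  AddMonoidAlgebra.lift k A (FreeAddMonoid X)
    (AddMonoidHom.toMultiplicativeLeft (FreeAddMonoid.lift fun x ↦ Additive.ofMul (g x)))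

theorem freeAssocLift_monomial {A : Type*} [Ring A] [Algebra k A] (g : X → A)
    (z : FreeAddMonoid X) : freeAssocLift k g (monomial k z) = (z.toList.map g).prod := by
  rw [freeAssocLift, AddMonoidAlgebra.lift_single, one_smul]
  exact FreeMonoid.lift_apply g (FreeMonoid.ofList z.toList)

end FreeAssoc

section Embedding

open AddMonoidAlgebra

variable (R k : Type*) [CommRing R] [CommRing k] [Algebra R k] {X : Type*}

/-- The expansion of Lie elements as noncommutative polynomials, along a change of scalars. -/
noncomputable def toFreeAssoc : FreeLieAlgebra R X →ₗ⁅R⁆ FreeAssoc k X :=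
  FreeLieAlgebra.lift R fun x ↦ monomial k (.of x)

theorem toFreeAssoc_of (x : X) :
    toFreeAssoc R k (FreeLieAlgebra.of R x) = monomial k (.of x) :=
  FreeLieAlgebra.lift_of_apply (R := R) _ x

variable {R k} in
theorem toFreeAssoc_smul_eq_zero {r : R}
    (hr : algebraMap R k r = 0) (a : FreeLieAlgebra R X) : toFreeAssoc R k (r • a) = 0 := by
  rw [map_smul, ← algebraMap_smul k, hr, zero_smul k _]

variable {R} in
theorem toFreeAssoc_lieHom_apply {G : Type*}
    (θ : FreeLieAlgebra R G →ₗ⁅R⁆ FreeLieAlgebra R X) (f : FreeLieAlgebra R G) :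
    toFreeAssoc R k (θ f) =
      freeAssocLift k (fun s ↦ toFreeAssoc R k (θ (.of R s))) (toFreeAssoc R k f) := by
  have h : (toFreeAssoc R k).comp θ = ((freeAssocLift k fun s ↦
      toFreeAssoc R k (θ (.of R s))).restrictScalars R).toLieHom.comp (toFreeAssoc R k) :=
    FreeLieAlgebra.hom_ext fun s ↦ by simp [toFreeAssoc_of, freeAssocLift_monomial]
  exact DFunLike.congr_fun h f

variable {R k} in
theorem freeAssocLift_zero_toFreeAssoc (a : FreeLieAlgebra R X) :
    freeAssocLift k (0 : X → k) (toFreeAssoc R k a) = 0 := by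
  have h : ((freeAssocLift k (0 : X → k)).restrictScalars R).toLieHom.comp (toFreeAssoc R k) = 0 :=
    FreeLieAlgebra.hom_ext fun x ↦ by
      simp [toFreeAssoc_of, freeAssocLift_monomial]
  exact DFunLike.congr_fun h a

section

variable [LinearOrder X] [Nontrivial k]

theorem toFreeAssoc_bracket_monic {t : FreeMagma X} (ht : IsLyndonTree t) :
    (toFreeAssoc R k (bracket R t)).Monic id ∧
      (toFreeAssoc R k (bracket R t)).supDegree id = FreeAddMonoid.ofList (word t) := by
  induction ht with
  | of x =>
    rw [show bracket R (.of x) = FreeLieAlgebra.of R x from rfl, toFreeAssoc_of]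
    exact ⟨leadingCoeff_single Function.injective_id _ _, supDegree_single_ne_zero _ one_ne_zero⟩
  | @mul u v hu hv huv _ ihu ihv =>
    obtain ⟨hu₁, hu₂⟩ := ihu
    obtain ⟨hv₁, hv₂⟩ := ihv
    set U := toFreeAssoc R k (bracket R u)
    set V := toFreeAssoc R k (bracket R v)
    have hadd (a b : FreeAddMonoid X) : id (a + b) = id a + id b := rfl
    have hUV : (U * V).supDegree id = FreeAddMonoid.ofList (word u ++ word v) := by
      rw [hu₁.supDegree_mul Function.injective_id hadd rfl hv₁, hu₂, hv₂]
      rfl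
    have hVU : (V * U).supDegree id = FreeAddMonoid.ofList (word v ++ word u) := by
      rw [hv₁.supDegree_mul Function.injective_id hadd rfl hu₁, hu₂, hv₂]
      rfl
    have hlt : (-(V * U)).supDegree id < (U * V).supDegree id := by
      rw [supDegree_neg, hUV, hVU]
      refine word_lt_iff.2 (.inr ⟨(List.length_append.trans (add_comm _ _)).trans
        List.length_append.symm, ?_⟩)
      exact (hu.isLyndon.append_lt hv.isLyndon huv).trans_le (le_append_right _ _)
    have hbr : toFreeAssoc R k (bracket R (u * v)) = U * V + -(V * U) := by
      rw [bracket_mul, LieHom.map_lie, LieRing.of_associative_ring_bracket, sub_eq_add_neg]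
    rw [hbr, Monic, leadingCoeff_add_eq_left hlt, supDegree_add_eq_left hlt, hUV, word_mul]
    exact ⟨hu₁.mul Function.injective_id hadd hv₁, rfl⟩

theorem exists_leading_toFreeAssoc {c : {t : FreeMagma X // IsLyndonTree t} →₀ k} (hc : c ≠ 0) :
    ∃ t ∈ c.support,
      (Finsupp.linearCombination k (fun t ↦ toFreeAssoc R k (bracket R t.1)) c).supDegree id =
        FreeAddMonoid.ofList (word t.1) ∧
      (Finsupp.linearCombination k (fun t ↦ toFreeAssoc R k (bracket R t.1)) c).leadingCoeff id =
        c t := by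
  have hinj : Function.Injective fun t : {t : FreeMagma X // IsLyndonTree t} ↦
      (toFreeAssoc R k (bracket R t.1)).supDegree id := fun s t hst ↦ by
    simp only [(toFreeAssoc_bracket_monic R k s.2).2,
      (toFreeAssoc_bracket_monic R k t.2).2] at hst
    exact Subtype.ext (s.2.eq_of_word_eq t.2 (FreeAddMonoid.ofList.injective hst))
  obtain ⟨t, ht, hdeg, hlead⟩ := exists_leading_linearCombination Function.injective_id
    (fun t ↦ (toFreeAssoc_bracket_monic R k t.2).1) hinj hc
  exact ⟨t, ht, hdeg.trans (toFreeAssoc_bracket_monic R k t.2).2, hlead⟩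

theorem linearIndependent_toFreeAssoc_bracket :
    LinearIndependent k fun t : {t : FreeMagma X // IsLyndonTree t} ↦
      toFreeAssoc R k (bracket R t.1) := by
  refine linearIndependent_iff.2 fun c hc ↦ by_contra fun hc0 ↦ ?_
  obtain ⟨t, ht, -, hlead⟩ := exists_leading_toFreeAssoc R k hc0
  rw [hc, AddMonoidAlgebra.leadingCoeff_zero] at hlead
  exact Finsupp.mem_support_iff.1 ht hlead.symm

end

section

variable [LinearOrder X] [Nontrivial R]

theorem linearIndependent_bracket :
    LinearIndependent R fun t : {t : FreeMagma X // IsLyndonTree t} ↦ bracket R t.1 :=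
  .of_comp (toFreeAssoc R R).toLinearMap (linearIndependent_toFreeAssoc_bracket R R)

/-- The basis of the free Lie algebra given by the standard bracketings of Lyndon words. -/
noncomputable def lyndonBasis :
    Module.Basis {t : FreeMagma X // IsLyndonTree t} R (FreeLieAlgebra R X) :=
  .mk (linearIndependent_bracket R) span_bracket_eq_top.ge

theorem lyndonBasis_apply (t : {t : FreeMagma X // IsLyndonTree t}) :
    lyndonBasis R t = bracket R t.1 :=
  Module.Basis.mk_apply _ _ t

theorem toFreeAssoc_eq_linearCombination (a : FreeLieAlgebra R X) :
    toFreeAssoc R k a =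
      Finsupp.linearCombination k
        (fun t : {t : FreeMagma X // IsLyndonTree t} ↦ toFreeAssoc R k (bracket R t.1))
        (((lyndonBasis R).repr a).mapRange (algebraMap R k) (map_zero _)) := by
  rw [Finsupp.linearCombination_apply,
    Finsupp.sum_mapRange_index (h := fun (t : {t : FreeMagma X // IsLyndonTree t}) c ↦
      c • toFreeAssoc R k (bracket R t.1)) fun t ↦ zero_smul k _]
  conv_lhs => rw [← (lyndonBasis R).linearCombination_repr a, Finsupp.linearCombination_apply,
    Finsupp.sum, map_sum]
  refine Finset.sum_congr rfl fun t _ ↦ ?_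
  rw [lyndonBasis_apply, map_smul]
  exact (algebraMap_smul k _ _).symm

end

variable (X) in
theorem exists_linearOrder_wellFoundedGT : ∃ _ : LinearOrder X, WellFoundedGT X := by
  obtain ⟨_, _⟩ := exists_wellFoundedLT (α := X)
  exact ⟨inferInstanceAs (LinearOrder Xᵒᵈ), inferInstanceAs (WellFoundedGT Xᵒᵈ)⟩

instance [Nontrivial R] : Module.Free R (FreeLieAlgebra R X) := by
  obtain ⟨_, -⟩ := exists_wellFoundedLT (α := X)
  exact .of_basis (lyndonBasis R)

variable {R} in
theorem mem_ker_smul_top_of_toFreeAssoc_eq_zero [Nontrivial k] {a : FreeLieAlgebra R X}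
    (ha : toFreeAssoc R k a = 0) :
    a ∈ RingHom.ker (algebraMap R k) • (⊤ : Submodule R (FreeLieAlgebra R X)) := by
  have : Nontrivial R := (algebraMap R k).domain_nontrivial
  obtain ⟨_, -⟩ := exists_wellFoundedLT (α := X)
  rw [toFreeAssoc_eq_linearCombination] at ha
  have hc := linearIndependent_iff.1 (linearIndependent_toFreeAssoc_bracket R k) _ ha
  rw [← (lyndonBasis R).linearCombination_repr a]
  refine Submodule.sum_mem _ fun t _ ↦ Submodule.smul_mem_smul ?_ Submodule.mem_top
  exact RingHom.mem_ker.2 (DFunLike.congr_fun hc t)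

theorem algebraMap_coeff_toFreeAssoc (a : FreeLieAlgebra R X) (z : FreeAddMonoid X) :
    algebraMap R k ((toFreeAssoc R R a).coeff z) = (toFreeAssoc R k a).coeff z := by
  have h : toFreeAssoc R k = (AddMonoidAlgebra.mapAlgHom (FreeAddMonoid X)
      (Algebra.ofId R k)).toLieHom.comp (toFreeAssoc R R) := by
    refine FreeLieAlgebra.hom_ext fun x ↦ ?_
    simp only [LieHom.comp_apply, toFreeAssoc_of, AlgHom.coe_toLieHom,
      AddMonoidAlgebra.mapAlgHom_single, map_one]
  rw [h, LieHom.comp_apply, AlgHom.coe_toLieHom, AddMonoidAlgebra.coeff_mapAlgHom]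
  rfl

variable {R k} in
theorem isLyndon_supDegree_toFreeAssoc [LinearOrder X] [Nontrivial k] {a : FreeLieAlgebra R X}
    (ha : toFreeAssoc R k a ≠ 0) : IsLyndon ((toFreeAssoc R k a).supDegree id).toList := by
  have : Nontrivial R := (algebraMap R k).domain_nontrivial
  rw [toFreeAssoc_eq_linearCombination] at ha ⊢
  obtain ⟨t, -, hdeg, -⟩ := exists_leading_toFreeAssoc R k
    fun hc ↦ ha ((congrArg _ hc).trans (map_zero _))
  exact hdeg.symm ▸ t.2.isLyndon

end Embedding

section AdjointAction

variable (R : Type*) [CommRing R] {X : Type*}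

/-- The action of the free associative algebra on the free Lie algebra that extends the adjoint
action of the latter on itself. -/
noncomputable def adAct : FreeAssoc R X →ₐ[R] Module.End R (FreeLieAlgebra R X) :=
  freeAssocLift R fun x ↦ LieAlgebra.ad R (FreeLieAlgebra R X) (.of R x)

theorem adAct_of (x : X) (y : FreeLieAlgebra R X) :
    adAct R (monomial R (.of x)) y = ⁅FreeLieAlgebra.of R x, y⁆ := by
  rw [adAct, freeAssocLift_monomial, FreeAddMonoid.toList_of, List.map_singleton,
    List.prod_singleton, LieAlgebra.ad_apply]

theorem adAct_monomial_zero (y : FreeLieAlgebra R X) : adAct R (monomial R 0) y = y := by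
  rw [adAct, freeAssocLift_monomial, FreeAddMonoid.toList_zero, List.map_nil, List.prod_nil,
    Module.End.one_apply]

theorem adAct_monomial_add (z z' : FreeAddMonoid X) (y : FreeLieAlgebra R X) :
    adAct R (monomial R (z + z')) y = adAct R (monomial R z) (adAct R (monomial R z') y) := by
  rw [monomial_add, map_mul, Module.End.mul_apply]

theorem adAct_toFreeAssoc (a y : FreeLieAlgebra R X) : adAct R (toFreeAssoc R R a) y = ⁅a, y⁆ := by
  have h : (adAct R).toLieHom.comp (toFreeAssoc R R) = LieAlgebra.ad R (FreeLieAlgebra R X) :=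
    FreeLieAlgebra.hom_ext fun x ↦ LinearMap.ext fun y ↦ by
      rw [LieHom.comp_apply, toFreeAssoc_of, AlgHom.coe_toLieHom, adAct_of, LieAlgebra.ad_apply]
  exact LinearMap.congr_fun (DFunLike.congr_fun h a) y

variable {R}

theorem adAct_mem_of_forall_monomial {N : Submodule R (FreeLieAlgebra R X)}
    {y : FreeLieAlgebra R X} (hN : ∀ z, adAct R (monomial R z) y ∈ N) (f : FreeAssoc R X) :
    adAct R f y ∈ N := by
  have hle : Submodule.span R (Set.range (monomial R (X := X))) ≤
      N.comap ((adAct R).toLinearMap.flip y) :=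
    Submodule.span_le.2 (Set.range_subset_iff.2 hN)
  exact hle (span_monomial_eq_top R ▸ Submodule.mem_top)

theorem adAct_mem (I : LieIdeal R (FreeLieAlgebra R X)) {y : FreeLieAlgebra R X} (hy : y ∈ I)
    (f : FreeAssoc R X) : adAct R f y ∈ I := by
  refine adAct_mem_of_forall_monomial (N := I.toSubmodule) (fun z ↦ ?_) f
  induction z using FreeAddMonoid.inductionOn' with
  | zero => rwa [adAct_monomial_zero]
  | of_add x z ih =>
    rw [adAct_monomial_add, adAct_of]
    exact I.lie_mem ih

theorem mem_lieSpan_singleton_iff {ρ y : FreeLieAlgebra R X} :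
    y ∈ lieSpan R (FreeLieAlgebra R X) {ρ} ↔ ∃ f, adAct R f ρ = y := by
  refine ⟨fun hy ↦ ?_, ?_⟩
  · induction hy using lieSpan_induction with
    | mem y hy => exact ⟨1, by rw [map_one, Module.End.one_apply, hy]⟩
    | zero => exact ⟨0, by rw [map_zero, LinearMap.zero_apply]⟩
    | add _ _ _ _ hy hy' =>
      obtain ⟨⟨f, rfl⟩, ⟨g, rfl⟩⟩ := And.intro hy hy'
      exact ⟨f + g, by rw [map_add, LinearMap.add_apply]⟩
    | smul c _ _ hy =>
      obtain ⟨f, rfl⟩ := hy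
      exact ⟨c • f, by rw [map_smul, LinearMap.smul_apply]⟩
    | lie x _ _ hy =>
      obtain ⟨f, rfl⟩ := hy
      exact ⟨toFreeAssoc R R x * f, by rw [map_mul, Module.End.mul_apply, adAct_toFreeAssoc]⟩
  · rintro ⟨f, rfl⟩
    exact adAct_mem _ (subset_lieSpan (Set.mem_singleton ρ)) f

theorem adAct_lie_mem (K : LieSubalgebra R (FreeLieAlgebra R X)) (l : List X)
    {y y' : FreeLieAlgebra R X}
    (hy : ∀ z : FreeAddMonoid X, z.length ≤ l.length → adAct R (monomial R z) y ∈ K)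
    (hy' : ∀ z : FreeAddMonoid X, z.length ≤ l.length → adAct R (monomial R z) y' ∈ K) :
    adAct R (monomial R (FreeAddMonoid.ofList l)) ⁅y, y'⁆ ∈ K := by
  induction l using List.reverseRecOn generalizing y y' with
  | nil =>
    have hyK := hy 0 le_rfl
    have hyK' := hy' 0 le_rfl
    rw [FreeAddMonoid.ofList_nil, adAct_monomial_zero]
    rw [adAct_monomial_zero] at hyK hyK'
    exact K.lie_mem hyK hyK'
  | append_singleton l x ih =>
    rw [List.length_append, List.length_singleton] at hy hy'
    have hshort {v : FreeLieAlgebra R X}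
        (hv : ∀ z : FreeAddMonoid X, z.length ≤ l.length + 1 → adAct R (monomial R z) v ∈ K)
        (z : FreeAddMonoid X) (hz : z.length ≤ l.length) :
        adAct R (monomial R z) v ∈ K ∧ adAct R (monomial R z) ⁅FreeLieAlgebra.of R x, v⁆ ∈ K := by
      refine ⟨hv z (by omega), ?_⟩
      rw [← adAct_of, ← adAct_monomial_add]
      exact hv _ (by rw [FreeAddMonoid.length_add, FreeAddMonoid.length_of]; omega)
    rw [FreeAddMonoid.ofList_append, FreeAddMonoid.ofList_singleton, adAct_monomial_add, adAct_of,
      leibniz_lie, map_add]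
    exact K.add_mem (ih (fun z hz ↦ (hshort hy z hz).2) fun z hz ↦ (hshort hy' z hz).1)
      (ih (fun z hz ↦ (hshort hy z hz).1) fun z hz ↦ (hshort hy' z hz).2)

end AdjointAction

section Rewriting

theorem monomial_mul_mul_monomial {k X : Type*} [CommRing k] (a b : FreeAddMonoid X)
    (f : FreeAssoc k X) :
    monomial k a * f * monomial k b =
      ∑ u ∈ f.coeff.support, f.coeff u • monomial k (a + u + b) := by
  conv_lhs => rw [← AddMonoidAlgebra.sum_coeff_single f, Finsupp.sum, Finset.mul_sum,
    Finset.sum_mul]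
  refine Finset.sum_congr rfl fun u _ ↦ ?_
  rw [AddMonoidAlgebra.single_mul_single, AddMonoidAlgebra.single_mul_single,
    AddMonoidAlgebra.smul_single, one_mul, mul_one, smul_eq_mul, mul_one]

/-- If `f` has leading word `w` with leading coefficient invertible modulo `J`, then the words
containing `w` can be rewritten, `f` being a rewriting rule. -/
theorem map_monomial_mem_of_rewrite {R X M : Type*} [CommRing R] [AddCommGroup M] [Module R M]
    [LinearOrder X] [WellFoundedGT X] (Φ : FreeAssoc R X →ₗ[R] M)
    {N : FreeAddMonoid X → Submodule R M} (hN : Monotone N) (J : Ideal R)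
    (hJ : ∀ r ∈ J, ∀ g z, r • Φ g ∈ N z) {f : FreeAssoc R X} {w : FreeAddMonoid X} {d : R}
    (hw : d * f.coeff w - 1 ∈ J) (hf : ∀ u, w < u → f.coeff u ∈ J)
    (havoid : ∀ z, ¬ w.toList <:+: z.toList → Φ (monomial R z) ∈ N z)
    (hrule : ∀ a b, (∀ z < a + w + b, Φ (monomial R z) ∈ N z) →
      Φ (monomial R a * f * monomial R b) ∈ N (a + w + b)) (z : FreeAddMonoid X) :
    Φ (monomial R z) ∈ N z := by
  induction z using WellFoundedLT.induction with | ind z ih =>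
  by_cases hz : w.toList <:+: z.toList
  · obtain ⟨a, b, hab⟩ := hz
    obtain rfl : FreeAddMonoid.ofList a + w + FreeAddMonoid.ofList b = z :=
      FreeAddMonoid.toList.injective hab
    set a := FreeAddMonoid.ofList a
    set b := FreeAddMonoid.ofList b
    have hother (u : FreeAddMonoid X) (hu : u ≠ w) :
        f.coeff u • Φ (monomial R (a + u + b)) ∈ N (a + w + b) := by
      rcases hu.lt_or_gt with hlt | hgt
      · have hlt' : a + u + b < a + w + b := by gcongr
        exact Submodule.smul_mem _ _ (hN hlt'.le (ih _ hlt'))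
      · exact hJ _ (hf u hgt) _ _
    have hlead : f.coeff w • Φ (monomial R (a + w + b)) ∈ N (a + w + b) := by
      have hsum := hrule a b ih
      simp only [monomial_mul_mul_monomial, map_sum, map_smul] at hsum
      by_cases hwf : w ∈ f.coeff.support
      · rw [← Finset.add_sum_erase _ _ hwf] at hsum
        exact (Submodule.add_mem_iff_left _ <| Submodule.sum_mem _ fun u hu ↦
          hother u (Finset.ne_of_mem_erase hu)).1 hsum
      · rw [Finsupp.notMem_support_iff.1 hwf, zero_smul]
        exact Submodule.zero_mem _
    have hunit := hJ _ hw (monomial R (a + w + b)) (a + w + b)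
    rw [sub_smul, mul_smul, one_smul] at hunit
    simpa only [sub_sub_cancel] using Submodule.sub_mem _ (Submodule.smul_mem _ d hlead) hunit
  · exact havoid z hz

end Rewriting

section Freeness

open MulOpposite

theorem linearIndependent_of_sub_mem_span {S M ι : Type*} [Ring S] [AddCommGroup M] [Module S M]
    [LinearOrder ι] {u v : ι → M} (hv : LinearIndependent S v)
    (huv : ∀ i, u i - v i ∈ Submodule.span S (v '' Set.Iio i)) : LinearIndependent S u := by
  refine linearIndependent_iff.2 fun c hc ↦ ?_
  by_contra hc0
  obtain ⟨i, hi, hmax⟩ := c.support.exists_max_image id (Finsupp.support_nonempty_iff.2 hc0)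
  have hu {j : ι} (hj : j < i) : u j ∈ Submodule.span S (v '' Set.Iio i) := by
    rw [← sub_add_cancel (u j) (v j)]
    refine Submodule.add_mem _ (Submodule.span_mono ?_ (huv j)) (Submodule.subset_span ?_)
    · exact Set.image_mono (Set.Iio_subset_Iio hj.le)
    · exact Set.mem_image_of_mem v hj
  have hrest : ∑ j ∈ c.support.erase i, c j • u j ∈ Submodule.span S (v '' Set.Iio i) :=
    Submodule.sum_mem _ fun j hj ↦ Submodule.smul_mem _ _ <|
      hu ((hmax j (Finset.mem_of_mem_erase hj)).lt_of_ne (Finset.ne_of_mem_erase hj))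
  rw [Finsupp.linearCombination_apply, Finsupp.sum, ← Finset.add_sum_erase _ _ hi] at hc
  have hui : c i • u i ∈ Submodule.span S (v '' Set.Iio i) := by
    rw [eq_neg_of_add_eq_zero_left hc]
    exact Submodule.neg_mem _ hrest
  have hvi : c i • v i ∈ Submodule.span S (v '' Set.Iio i) := by
    have := Submodule.sub_mem _ hui (Submodule.smul_mem _ (c i) (huv i))
    rwa [← smul_sub, sub_sub_cancel] at this
  refine Finsupp.mem_support_iff.1 hi <|
    hv.eq_zero_of_smul_mem_span i _ (Submodule.span_mono (Set.image_mono fun j hj ↦ ?_) hvi)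
  exact ⟨Set.mem_univ j, (Set.mem_Iio.1 hj).ne⟩

theorem exists_eq_single_add_sum {k ι : Type*} [CommRing k] (a : FreeAssoc k ι) :
    ∃ b : ι →₀ FreeAssoc k ι,
      a = algebraMap k _ (a.coeff 0) + b.sum (fun i f ↦ monomial k (.of i) * f) ∧
        ∀ i z, a.coeff (.of i + z) = (b i).coeff z := by
  classical
  induction a using AddMonoidAlgebra.induction_linear with
  | zero => exact ⟨0, by simp, by simp⟩
  | add f g hf hg =>
    obtain ⟨⟨b, hb, hb'⟩, ⟨c, hc, hc'⟩⟩ := And.intro hf hg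
    refine ⟨b + c, ?_, fun i z ↦ ?_⟩
    · rw [Finsupp.sum_add_index' (by simp) (by simp [mul_add])]
      conv_lhs => rw [hb, hc]
      rw [AddMonoidAlgebra.coeff_add, Finsupp.add_apply, map_add]
      abel
    · simp [hb', hc']
  | single z c =>
    cases z using FreeAddMonoid.casesOn with
    | zero => exact ⟨0, by simp, fun i z ↦ by simp⟩
    | of_add i z =>
      refine ⟨.single i (.single z c), by simp, fun j z' ↦ ?_⟩
      have hcons : FreeAddMonoid.of i + z = .of j + z' ↔ i = j ∧ z = z' := List.cons_eq_cons
      by_cases hij : i = j <;> simp [Finsupp.single_apply, hcons, hij]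

/-- The augmentation `ε` isolates the constant term of a relation; right linear independence then
splits the rest according to the first letter. -/
theorem freeAssocLift_injective {k A ι : Type*} [CommRing k] [Ring A] [Algebra k A] {g : ι → A}
    (ε : A →ₐ[k] k) (hε : ∀ i, ε (g i) = 0) (hg : LinearIndependent Aᵐᵒᵖ g) :
    Function.Injective (freeAssocLift k g) := by
  have hsplit (a : FreeAssoc k ι) (ha : freeAssocLift k g a = 0) :
      a.coeff 0 = 0 ∧ ∀ i, ∃ f, freeAssocLift k g f = 0 ∧ ∀ z, a.coeff (.of i + z) = f.coeff z := by
    obtain ⟨b, hb, hcoeff⟩ := exists_eq_single_add_sum a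
    have hexpand : algebraMap k A (a.coeff 0) +
        ∑ i ∈ b.support, g i * freeAssocLift k g (b i) = 0 := by
      rw [← ha]
      conv_rhs => rw [hb, map_add, AlgHom.commutes, Finsupp.sum, map_sum]
      simp only [map_mul, freeAssocLift_monomial, FreeAddMonoid.toList_of, List.map_singleton,
        List.prod_singleton]
    have hconst : a.coeff 0 = 0 := by
      simpa only [map_add, AlgHom.commutes, Algebra.algebraMap_self_apply, map_sum, map_mul, hε,
        zero_mul, Finset.sum_const_zero, add_zero, map_zero] using congrArg ε hexpand
    rw [hconst, map_zero, zero_add] at hexpand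
    refine ⟨hconst, fun i ↦ ⟨b i, ?_, hcoeff i⟩⟩
    by_cases hi : i ∈ b.support
    · exact op_injective
        (linearIndependent_iff'.1 hg _ (fun i ↦ op (freeAssocLift k g (b i))) hexpand i hi)
    · rw [Finsupp.notMem_support_iff.1 hi, map_zero]
  have hcoeff (z : FreeAddMonoid ι) :
      ∀ a : FreeAssoc k ι, freeAssocLift k g a = 0 → a.coeff z = 0 := by
    induction z using FreeAddMonoid.inductionOn' with
    | zero => exact fun a ha ↦ (hsplit a ha).1
    | of_add i z ih =>
      intro a ha
      obtain ⟨f, hf, hcoeff⟩ := (hsplit a ha).2 i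
      rw [hcoeff, ih f hf]
  refine (injective_iff_map_eq_zero _).2 fun a ha ↦ ?_
  ext z
  exact hcoeff z a ha

end Freeness

section LeadingWord

open MulOpposite AddMonoidAlgebra

/-- The words that do not contain `w` as a factor, that is, the irreducible words for a rewriting
rule with leading word `w`. -/
abbrev AvoidingWord {X : Type*} (w : FreeAddMonoid X) : Type _ :=
  {s : FreeAddMonoid X // ¬ w.toList <:+: s.toList}

variable {k X : Type*} [CommRing k] [LinearOrder X] {w : FreeAddMonoid X} {r : FreeAssoc k X}

theorem coeff_supDegree_ne_zero {f : FreeAssoc k X} (hf : f ≠ 0) :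
    f.coeff (f.supDegree id) ≠ 0 := by
  have h := mt (AddMonoidAlgebra.leadingCoeff_eq_zero Function.injective_id).1 hf
  have hinv : Function.invFun id (f.supDegree id) = f.supDegree id :=
    Function.leftInverse_invFun Function.injective_id (f.supDegree id)
  rwa [AddMonoidAlgebra.leadingCoeff, hinv] at h

theorem supDegree_mul_of_ne_zero [NoZeroDivisors k] {f g : FreeAssoc k X} (hf : f ≠ 0)
    (hg : g ≠ 0) : (f * g).supDegree id = f.supDegree id + g.supDegree id :=
  supDegree_mul Function.injective_id (fun _ _ ↦ rfl)
    (mul_ne_zero (mt (leadingCoeff_eq_zero Function.injective_id).1 hf)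
      (mt (leadingCoeff_eq_zero Function.injective_id).1 hg)) hf hg

theorem linearIndependent_monomial_mul [IsDomain k] (hw : IsLyndon w.toList) (hr : r ≠ 0)
    (hdeg : r.supDegree id = w) :
    LinearIndependent (FreeAssoc k X)ᵐᵒᵖ
      fun s : AvoidingWord w ↦ monomial k s.1 * r := by
  refine linearIndependent_iff.2 fun c hc ↦ ?_
  by_contra hc0
  rw [Finsupp.linearCombination_apply] at hc
  have hmon (s : FreeAddMonoid X) : monomial k s ≠ 0 := single_ne_zero.2 one_ne_zero
  have hterm (s) (hs : s ∈ c.support) : c s • (monomial k s.1 * r) ≠ 0 ∧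
      (c s • (monomial k s.1 * r)).supDegree id = s.1 + w + (unop (c s)).supDegree id := by
    have hs' : unop (c s) ≠ 0 := unop_ne_zero_iff _ |>.2 (Finsupp.mem_support_iff.1 hs)
    have hsr := mul_ne_zero (hmon s.1) hr
    rw [← op_unop (c s), op_smul_eq_mul, supDegree_mul_of_ne_zero hsr hs',
      supDegree_mul_of_ne_zero (hmon s.1) hr, hdeg, supDegree_single_ne_zero _ one_ne_zero]
    exact ⟨mul_ne_zero hsr hs', rfl⟩
  refine sum_ne_zero_of_injOn_supDegree (D := id) (Finsupp.support_nonempty_iff.2 hc0)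
    (fun s hs ↦ (hterm s hs).1) (fun s hs t ht hst ↦ Subtype.ext ?_) hc
  simp only [Function.comp_apply, (hterm s hs).2, (hterm t ht).2] at hst
  exact FreeAddMonoid.toList.injective (hw.eq_and_eq_of_first_occurrence s.2 t.2 hst).1

theorem monomial_mul_mem_span [WellFoundedGT X] (hw : w ≠ 0) (hdeg : r.supDegree id = w)
    (hunit : IsUnit (r.coeff w)) (z : FreeAddMonoid X) :
    monomial k z * r ∈ Submodule.span (FreeAssoc k X)ᵐᵒᵖ
      ((fun s : AvoidingWord w ↦ monomial k s.1 * r) '' {s | s.1 ≤ z}) := by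
  obtain ⟨d, hd⟩ := hunit.exists_left_inv
  set v : AvoidingWord w → FreeAssoc k X := fun s ↦ monomial k s.1 * r
  set N : FreeAddMonoid X → Submodule (FreeAssoc k X)ᵐᵒᵖ (FreeAssoc k X) := fun z ↦
    Submodule.span _ (v '' {s | s.1 ≤ z})
  have hN : Monotone N := fun y z hyz ↦
    Submodule.span_mono (Set.image_mono fun s hs ↦ le_trans hs hyz)
  refine map_monomial_mem_of_rewrite (LinearMap.mulRight k r)
    (N := fun z ↦ (N z).restrictScalars k) hN ⊥ (fun c hc g z ↦ ?_)
    (f := r) (w := w) (d := d) ?_ (fun u hu ↦ ?_) (fun z hz ↦ ?_) (fun a b ih ↦ ?_) z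
  · rw [Ideal.mem_bot.1 hc, zero_smul k _]
    exact Submodule.zero_mem _
  · exact Ideal.mem_bot.2 (sub_eq_zero.2 hd)
  · exact coeff_eq_zero_of_not_le_supDegree (D := id) (hdeg.symm ▸ hu.not_ge)
  · rw [Submodule.restrictScalars_mem, LinearMap.mulRight_apply]
    exact Submodule.subset_span ⟨⟨z, hz⟩, Set.mem_ofPred.2 (le_refl z), rfl⟩
  · rw [Submodule.restrictScalars_mem, LinearMap.mulRight_apply, mul_assoc (monomial k a * r),
      ← op_smul_eq_mul]
    have ha : a < a + w + b := lt_add_add_of_length_le hw (Nat.le_add_right _ _)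
    exact (N _).smul_mem _ (hN ha.le (ih a ha))

end LeadingWord

section Deformation

open MulOpposite

variable {R k X : Type*} [CommRing R] [CommRing k] [Algebra R k] [LinearOrder X]

theorem toFreeAssoc_adAct_sub_mem_span (ρ : FreeLieAlgebra R X) (z : FreeAddMonoid X) :
    toFreeAssoc R k (adAct R (monomial R z) ρ) - monomial k z * toFreeAssoc R k ρ ∈
      Submodule.span (FreeAssoc k X)ᵐᵒᵖ
        ((fun y ↦ monomial k y * toFreeAssoc R k ρ) '' Set.Iio z) := by
  set v : FreeAddMonoid X → FreeAssoc k X := fun y ↦ monomial k y * toFreeAssoc R k ρ with hv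
  induction z using FreeAddMonoid.inductionOn' with
  | zero =>
    rw [adAct_monomial_zero, show monomial k (X := X) 0 = 1 from rfl, one_mul, sub_self]
    exact zero_mem _
  | of_add x z ih =>
    set h := toFreeAssoc R k (adAct R (monomial R z) ρ)
    set m := monomial k (.of x)
    have hz : z < .of x + z := word_lt_iff.2 (.inl (by simp))
    have hleft : m * (h - v z) ∈ Submodule.span (FreeAssoc k X)ᵐᵒᵖ (v '' Set.Iio (.of x + z)) := by
      have hmap := Submodule.mem_map_of_mem
        (f := DistribSMul.toLinearMap (FreeAssoc k X)ᵐᵒᵖ (FreeAssoc k X) m) ih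
      rw [Submodule.map_span, Set.image_image] at hmap
      refine Submodule.span_mono ?_ hmap
      rintro _ ⟨y, hy, rfl⟩
      refine ⟨.of x + y, add_lt_add_right (Set.mem_Iio.1 hy) _, ?_⟩
      simp only [hv, monomial_add, mul_assoc]
      rfl
    have hright : h * m ∈ Submodule.span (FreeAssoc k X)ᵐᵒᵖ (v '' Set.Iio (.of x + z)) := by
      rw [← op_smul_eq_mul, ← sub_add_cancel h (v z)]
      refine Submodule.smul_mem _ _ (Submodule.add_mem _ (Submodule.span_mono ?_ ih)
        (Submodule.subset_span (Set.mem_image_of_mem v hz)))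
      exact Set.image_mono (Set.Iio_subset_Iio hz.le)
    have hexpand : toFreeAssoc R k (adAct R (monomial R (.of x + z)) ρ) - v (.of x + z) =
        m * (h - v z) - h * m := by
      rw [adAct_monomial_add, adAct_of, LieHom.map_lie, toFreeAssoc_of,
        LieRing.of_associative_ring_bracket]
      simp only [hv, monomial_add, mul_sub, mul_assoc]
      abel
    rw [hexpand]
    exact Submodule.sub_mem _ hleft hright

end Deformation

section FieldCoefficients

variable {R k X : Type*} [CommRing R] [Field k] [Algebra R k] [LinearOrder X] [WellFoundedGT X]
  {w : FreeAddMonoid X} {ρ : FreeLieAlgebra R X}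

theorem linearIndependent_toFreeAssoc_adAct (hρ : toFreeAssoc R k ρ ≠ 0)
    (hdeg : (toFreeAssoc R k ρ).supDegree id = w) :
    LinearIndependent (FreeAssoc k X)ᵐᵒᵖ
      fun s : AvoidingWord w ↦ toFreeAssoc R k (adAct R (monomial R s.1) ρ) := by
  have hw : IsLyndon w.toList := hdeg ▸ isLyndon_supDegree_toFreeAssoc hρ
  have hw0 : w ≠ 0 := fun h ↦ hw.1 (congrArg FreeAddMonoid.toList h)
  have hunit : IsUnit ((toFreeAssoc R k ρ).coeff w) :=
    (hdeg ▸ coeff_supDegree_ne_zero hρ).isUnit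
  refine linearIndependent_of_sub_mem_span (linearIndependent_monomial_mul hw hρ hdeg) fun s ↦ ?_
  refine Submodule.span_le.2 ?_ (toFreeAssoc_adAct_sub_mem_span ρ s.1)
  rintro _ ⟨y, hy, rfl⟩
  refine Submodule.span_mono (Set.image_mono fun t ht ↦ ?_)
    (monomial_mul_mem_span hw0 hdeg hunit y)
  exact (Set.mem_ofPred.1 ht).trans_lt hy

theorem freeAssocLift_toFreeAssoc_adAct_injective (hρ : toFreeAssoc R k ρ ≠ 0)
    (hdeg : (toFreeAssoc R k ρ).supDegree id = w) :
    Function.Injective (freeAssocLift k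
      fun s : AvoidingWord w ↦ toFreeAssoc R k (adAct R (monomial R s.1) ρ)) :=
  freeAssocLift_injective (freeAssocLift k 0) (fun _ ↦ freeAssocLift_zero_toFreeAssoc _)
    (linearIndependent_toFreeAssoc_adAct hρ hdeg)

end FieldCoefficients

section IdealGenerators

variable {R : Type*} [CommRing R]

section

variable {L : Type*} [LieRing L] [LieAlgebra R L]

/-- The product of an ideal of scalars and a Lie ideal, as a Lie ideal. -/
def smulLieIdeal (J : Ideal R) (I : LieIdeal R L) : LieIdeal R L where
  __ := J • I.toSubmodule
  lie_mem {x y} hy := by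
    refine Submodule.smul_induction_on (p := fun y ↦ ⁅x, y⁆ ∈ J • I.toSubmodule) hy ?_ ?_
    · intro r hr y hy
      rw [lie_smul]
      exact Submodule.smul_mem_smul hr (I.lie_mem hy)
    · intro y z hy hz
      rw [lie_add]
      exact Submodule.add_mem _ hy hz

/-- The sum of a Lie subalgebra and a Lie ideal, as a Lie subalgebra. -/
def supLieIdeal (K : LieSubalgebra R L) (I : LieIdeal R L) : LieSubalgebra R L where
  __ := K.toSubmodule ⊔ I.toSubmodule
  lie_mem' {x y} hx hy := by
    obtain ⟨a, ha, i, hi, rfl⟩ := Submodule.mem_sup.1 hx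
    obtain ⟨b, hb, j, hj, rfl⟩ := Submodule.mem_sup.1 hy
    refine Submodule.mem_sup.2 ⟨⁅a, b⁆, K.lie_mem ha hb, ⁅a, j⁆ + ⁅i, b + j⁆, ?_, ?_⟩
    · exact I.add_mem (I.lie_mem hj) (lie_mem_left R L I i (b + j) hi)
    · rw [add_lie, lie_add a, add_assoc]

end

variable {X : Type*}

/-- The homomorphism to the free Lie algebra that sends the free generator indexed by a word `s`
avoiding `w` to the iterated commutator of `ρ` with the letters of `s`. -/
noncomputable def relatorLift (w : FreeAddMonoid X) (ρ : FreeLieAlgebra R X) :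
    FreeLieAlgebra R (AvoidingWord w) →ₗ⁅R⁆ FreeLieAlgebra R X :=
  FreeLieAlgebra.lift R fun s ↦ adAct R (monomial R s.1) ρ

theorem relatorLift_of (w : FreeAddMonoid X) (ρ : FreeLieAlgebra R X) (s : AvoidingWord w) :
    relatorLift w ρ (.of R s) = adAct R (monomial R s.1) ρ :=
  FreeLieAlgebra.lift_of_apply (R := R) _ s

theorem relatorLift_mem (w : FreeAddMonoid X) (ρ : FreeLieAlgebra R X)
    (f : FreeLieAlgebra R (AvoidingWord w)) :
    relatorLift w ρ f ∈ lieSpan R (FreeLieAlgebra R X) {ρ} := by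
  let I : LieIdeal R (FreeLieAlgebra R X) := lieSpan R (FreeLieAlgebra R X) {ρ}
  have htop : I.toLieSubalgebra.comap (relatorLift w ρ) = ⊤ := by
    refine lieSubalgebra_eq_top_of_forall_of_mem R _ fun s ↦ ?_
    rw [LieSubalgebra.mem_comap, relatorLift_of]
    exact mem_lieSpan_singleton_iff.2 ⟨_, rfl⟩
  exact (LieSubalgebra.mem_comap _ _).1 (htop ▸ LieSubalgebra.mem_top f)

/-- The product `a * ρ * b` acts on `ρ` as `ad_a ⁅ρ, ad_b ρ⁆`, which the Leibniz rule expands into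
brackets of shorter commutators. -/
theorem adAct_rewrite_mem [LinearOrder X] {w : FreeAddMonoid X} {ρ : FreeLieAlgebra R X}
    (K : LieSubalgebra R (FreeLieAlgebra R X)) (hw : w ≠ 0)
    {a b : FreeAddMonoid X} (hK : ∀ z < a + w + b, adAct R (monomial R z) ρ ∈ K) :
    adAct R (monomial R a * toFreeAssoc R R ρ * monomial R b) ρ ∈ K := by
  rw [map_mul, map_mul, Module.End.mul_apply, Module.End.mul_apply, adAct_toFreeAssoc]
  refine adAct_lie_mem K a.toList (fun z hz ↦ hK z ?_) fun z hz ↦ ?_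
  · exact lt_add_add_of_length_le hw (le_add_right hz)
  · rw [← adAct_monomial_add]
    refine hK _ (lt_add_add_of_length_le hw ?_)
    rw [FreeAddMonoid.length_add]
    exact Nat.add_le_add_right hz _

end IdealGenerators

section PrimeQuotient

variable {R X k : Type*} [CommRing R] [Field k] [Algebra R k] [LinearOrder X] [WellFoundedGT X]
  {w : FreeAddMonoid X} {ρ : FreeLieAlgebra R X}

theorem toFreeAssoc_eq_zero_of_relatorLift (hρ : toFreeAssoc R k ρ ≠ 0)
    (hdeg : (toFreeAssoc R k ρ).supDegree id = w) {f : FreeLieAlgebra R (AvoidingWord w)}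
    (hf : toFreeAssoc R k (relatorLift w ρ f) = 0) : toFreeAssoc R k f = 0 := by
  rw [toFreeAssoc_lieHom_apply] at hf
  simp only [relatorLift_of] at hf
  exact (map_eq_zero_iff _ (freeAssocLift_toFreeAssoc_adAct_injective hρ hdeg)).1 hf

theorem mem_supLieIdeal_of_mem_lieSpan_singleton (hk : Function.Surjective (algebraMap R k))
    (hρ : toFreeAssoc R k ρ ≠ 0) (hdeg : (toFreeAssoc R k ρ).supDegree id = w)
    {y : FreeLieAlgebra R X} (hy : y ∈ lieSpan R (FreeLieAlgebra R X) {ρ}) :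
    y ∈ supLieIdeal (relatorLift w ρ).range
      (smulLieIdeal (RingHom.ker (algebraMap R k)) (lieSpan R (FreeLieAlgebra R X) {ρ})) := by
  set J := RingHom.ker (algebraMap R k)
  set I : LieIdeal R (FreeLieAlgebra R X) := lieSpan R (FreeLieAlgebra R X) {ρ}
  set K := supLieIdeal (relatorLift w ρ).range (smulLieIdeal J I)
  have hw : w ≠ 0 := fun h ↦
    (isLyndon_supDegree_toFreeAssoc hρ).1 (congrArg FreeAddMonoid.toList (hdeg.trans h))
  obtain ⟨d, hd⟩ := hk ((toFreeAssoc R k ρ).coeff w)⁻¹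
  have hunit : (toFreeAssoc R k ρ).coeff w ≠ 0 := hdeg ▸ coeff_supDegree_ne_zero hρ
  have hmon (z : FreeAddMonoid X) : adAct R (monomial R z) ρ ∈ K.toSubmodule := by
    refine map_monomial_mem_of_rewrite ((adAct R).toLinearMap.flip ρ) (N := fun _ ↦ K.toSubmodule)
      monotone_const J (fun r hr g _ ↦ ?_) (f := toFreeAssoc R R ρ) (w := w) (d := d) ?_
      (fun u hu ↦ ?_) (fun s hs ↦ ?_) (fun a b ih ↦ ?_) z
    · exact Submodule.mem_sup_right
        (Submodule.smul_mem_smul hr (mem_lieSpan_singleton_iff.2 ⟨g, rfl⟩))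
    · rw [RingHom.mem_ker, map_sub, map_mul, map_one, hd, algebraMap_coeff_toFreeAssoc,
        inv_mul_cancel₀ hunit, sub_self]
    · rw [RingHom.mem_ker, algebraMap_coeff_toFreeAssoc]
      exact AddMonoidAlgebra.coeff_eq_zero_of_not_le_supDegree (D := id) (hdeg.symm ▸ hu.not_ge)
    · exact Submodule.mem_sup_left ⟨.of R ⟨s, hs⟩, relatorLift_of w ρ ⟨s, hs⟩⟩
    · exact adAct_rewrite_mem K hw ih
  obtain ⟨g, rfl⟩ := mem_lieSpan_singleton_iff.1 hy
  exact adAct_mem_of_forall_monomial hmon g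

theorem mem_lieSpan_singleton_of_smul_mem [IsDomain R] {p : R} (hp : p ≠ 0)
    (hk : Function.Surjective (algebraMap R k))
    (hker : RingHom.ker (algebraMap R k) = Ideal.span {p}) (hρ : toFreeAssoc R k ρ ≠ 0)
    {a : FreeLieAlgebra R X} (ha : p • a ∈ lieSpan R (FreeLieAlgebra R X) {ρ}) :
    a ∈ lieSpan R (FreeLieAlgebra R X) {ρ} := by
  obtain ⟨_, ⟨f, rfl⟩, j, hj, hfj⟩ := Submodule.mem_sup.1 <|
    mem_supLieIdeal_of_mem_lieSpan_singleton hk hρ rfl ha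
  change j ∈ RingHom.ker (algebraMap R k) • (lieSpan R (FreeLieAlgebra R X) {ρ}).toSubmodule at hj
  rw [hker, Submodule.ideal_span_singleton_smul] at hj
  obtain ⟨i, hi, rfl⟩ := (Submodule.mem_smul_pointwise_iff_exists _ _ _).1 hj
  have hfp : relatorLift _ ρ f = p • (a - i) := by
    rw [smul_sub, ← hfj]
    exact (add_sub_cancel_right _ _).symm
  have hp0 : algebraMap R k p = 0 := by
    rw [← RingHom.mem_ker, hker]
    exact Ideal.mem_span_singleton_self p
  have hf := mem_ker_smul_top_of_toFreeAssoc_eq_zero k <|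
    toFreeAssoc_eq_zero_of_relatorLift hρ rfl (hfp ▸ toFreeAssoc_smul_eq_zero hp0 (a - i))
  rw [hker, Submodule.ideal_span_singleton_smul] at hf
  obtain ⟨g, -, rfl⟩ := (Submodule.mem_smul_pointwise_iff_exists _ _ _).1 hf
  rw [map_smul] at hfp
  rw [← sub_add_cancel a i, ← smul_right_injective _ hp hfp]
  exact add_mem (relatorLift_mem _ _ g) hi

end PrimeQuotient

theorem mem_lieSpan_singleton_of_prime_smul_mem {R X : Type*} [CommRing R] [IsDomain R]
    [IsPrincipalIdealRing R] {ρ : FreeLieAlgebra R X}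
    (hρ : ∀ (r : R) (σ : FreeLieAlgebra R X), ρ = r • σ → IsUnit r) {p : R} (hp : Prime p)
    {a : FreeLieAlgebra R X} (ha : p • a ∈ lieSpan R (FreeLieAlgebra R X) {ρ}) :
    a ∈ lieSpan R (FreeLieAlgebra R X) {ρ} := by
  have hmax : (Ideal.span {p}).IsMaximal :=
    PrincipalIdealRing.isMaximal_of_irreducible hp.irreducible
  let _ : Field (R ⧸ Ideal.span {p}) := Ideal.Quotient.field _
  have hker : RingHom.ker (algebraMap R (R ⧸ Ideal.span {p})) = Ideal.span {p} := Ideal.mk_ker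
  obtain ⟨_, _⟩ := exists_linearOrder_wellFoundedGT X
  refine mem_lieSpan_singleton_of_smul_mem (k := R ⧸ Ideal.span {p}) hp.ne_zero
    Ideal.Quotient.mk_surjective hker (fun h ↦ hp.not_isUnit ?_) ha
  have hmem := mem_ker_smul_top_of_toFreeAssoc_eq_zero _ h
  rw [hker, Submodule.ideal_span_singleton_smul] at hmem
  obtain ⟨σ, -, hσ⟩ := (Submodule.mem_smul_pointwise_iff_exists _ _ _).1 hmem
  exact hρ p σ hσ.symm

end OneRelatorLie

open OneRelatorLie in
theorem quotient_by_non_proper_multiple_torsion_free_general {R X : Type*} [CommRing R]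
    [IsDomain R] [IsPrincipalIdealRing R] (ρ : FreeLieAlgebra R X)
    (hρ : ∀ (r : R) (σ : FreeLieAlgebra R X), ρ = r • σ → IsUnit r) :
    Submodule.torsion R (FreeLieAlgebra R X ⧸ lieSpan R (FreeLieAlgebra R X) {ρ}) = ⊥ := by
  rw [← Submodule.isTorsionFree_iff_torsion_eq_bot, Module.isTorsionFree_iff_smul_eq_zero]
  intro r y
  induction r using UniqueFactorizationMonoid.induction_on_prime generalizing y with
  | h₁ => exact fun _ ↦ .inl rfl
  | h₂ u hu => exact fun h ↦ .inr (hu.smul_eq_zero.1 h)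
  | h₃ r p _ hp ih =>
    intro h
    rw [mul_smul] at h
    refine (ih y ?_).imp_left fun hr ↦ by rw [hr, mul_zero]
    obtain ⟨a, ha⟩ := Quotient.mk_surjective (r • y)
    rw [← ha] at h ⊢
    exact Quotient.mk_eq_zero'.2 (mem_lieSpan_singleton_of_prime_smul_mem hρ hp <|
      Quotient.mk_eq_zero'.1 h)

/-- Let `X` be a finite set with `|X| = m ≥ 2` and `L` the free Lie algebra over `ℤ` on `X`,
with its natural grading in which generators have degree `1`.  Let `ρ ∈ L` be homogeneous of
degree `e ≥ 2` which is not a proper multiple, i.e. `ρ = k·σ` forces `k = ±1`.  Then the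
quotient of `L` by the Lie ideal generated by `ρ` is torsion free as a `ℤ`-module. -/
theorem quotient_by_non_proper_multiple_torsion_free (X : Type*) [Fintype X] (m : ℕ)
    (hm : 2 ≤ m) (hcard : Fintype.card X = m) (e : ℕ) (he : 2 ≤ e)
    (ρ : FreeLieAlgebra ℤ X) (hρ : ρ ∈ homogeneousComponent X e)
    (hprim : ∀ (k : ℤ) (σ : FreeLieAlgebra ℤ X), ρ = k • σ → k = 1 ∨ k = -1) :
    Submodule.torsion ℤ
      (FreeLieAlgebra ℤ X ⧸ lieSpan ℤ (FreeLieAlgebra ℤ X) {ρ}) = ⊥ := by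
  exact quotient_by_non_proper_multiple_torsion_free_general ρ fun k σ h ↦
    Int.isUnit_iff.2 (hprim k σ h)
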